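/- arXiv:1901.02358 — 2 statements merged into one kernel-verified Lean document; each statement's English description precedes it below -/
import Mathlib

section
/- Let d, t, T be natural numbers with t ≤ T, let α ≥ 0 and β > 0 be real numbers, and let A_t, A_{t+1}, …, A_{T-1} ∈ ℝ^{d×d} be matrices with ‖A_k‖₂ ≤ m for all k, where (α/β)·m < 1. Then the matrix M = ∏_{k=t}^{T-1} (α A_k + β I) is invertible and its condition number satisfies ‖M‖₂ · ‖M⁻¹‖₂ ≤ ((1 + (α/β)m)/(1 − (α/β)m))^{T−t}. -/
/-- The spectral (ℓ₂ operator) norm of a real matrix. -/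
noncomputable def specNorm {m n : ℕ} (A : Matrix (Fin m) (Fin n) ℝ) : ℝ :=
  ‖LinearMap.toContinuousLinearMap (Matrix.toEuclideanLin A)‖

section helpers
open scoped Matrix.Norms.L2Operator

theorem specNorm_eq_norm {d : ℕ} (A : Matrix (Fin d) (Fin d) ℝ) : specNorm A = ‖A‖ := rfl

theorem l2_norm_one_le {d : ℕ} : ‖(1 : Matrix (Fin d) (Fin d) ℝ)‖ ≤ 1 := by
  rw [← specNorm_eq_norm, specNorm]
  refine ContinuousLinearMap.opNorm_le_bound _ zero_le_one (fun x => ?_)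
  simp [Matrix.toEuclideanLin]

theorem single_factor {d : ℕ} (α β m : ℝ) (hα : 0 ≤ α) (hβ : 0 < β)
    (A : Matrix (Fin d) (Fin d) ℝ) (hA : ‖A‖ ≤ m) (hm : α / β * m < 1) :
    IsUnit (α • A + β • (1 : Matrix (Fin d) (Fin d) ℝ)) ∧
      ‖α • A + β • (1 : Matrix (Fin d) (Fin d) ℝ)‖ *
        ‖(α • A + β • (1 : Matrix (Fin d) (Fin d) ℝ))⁻¹‖ ≤
        (1 + α / β * m) / (1 - α / β * m) := by
  have hm' : α * m < β := by
    rw [div_mul_eq_mul_div, div_lt_one hβ] at hm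
    exact hm
  have hu : IsUnit (α • A + β • (1 : Matrix (Fin d) (Fin d) ℝ)) := by
    have h1 : ‖-((α / β) • A)‖ < 1 := by
      rw [norm_neg, norm_smul, Real.norm_of_nonneg (by positivity)]
      exact lt_of_le_of_lt (mul_le_mul_of_nonneg_left hA (by positivity)) hm
    have h2 := isUnit_one_sub_of_norm_lt_one h1
    have h3 : α • A + β • (1 : Matrix (Fin d) (Fin d) ℝ)
        = (Units.mk0 β hβ.ne') • (1 - -((α / β) • A)) := by
      rw [Units.smul_mk0, sub_neg_eq_add, smul_add, smul_smul, mul_div_cancel₀ _ hβ.ne', add_comm]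
    rw [h3]
    exact h2.smul _
  refine ⟨hu, ?_⟩
  set B := α • A + β • (1 : Matrix (Fin d) (Fin d) ℝ) with hB
  have hBn : ‖B‖ ≤ α * m + β := by
    refine (norm_add_le _ _).trans ?_
    rw [norm_smul, norm_smul, Real.norm_of_nonneg hα, Real.norm_of_nonneg hβ.le]
    have := mul_le_mul_of_nonneg_left hA hα
    have := mul_le_mul_of_nonneg_left (l2_norm_one_le (d := d)) hβ.le
    linarith
  have hinv : B * B⁻¹ = 1 := Matrix.mul_nonsing_inv _ ((Matrix.isUnit_iff_isUnit_det _).1 hu)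
  have hBi : β * ‖B⁻¹‖ ≤ 1 + α * m * ‖B⁻¹‖ := by
    have e : β • B⁻¹ = 1 - α • (A * B⁻¹) := by
      rw [← hinv]
      nth_rewrite 2 [hB]
      rw [add_mul, smul_mul_assoc, smul_mul_assoc, one_mul]
      abel
    calc β * ‖B⁻¹‖ = ‖β • B⁻¹‖ := by rw [norm_smul, Real.norm_of_nonneg hβ.le]
      _ ≤ ‖(1 : Matrix (Fin d) (Fin d) ℝ)‖ + ‖α • (A * B⁻¹)‖ := by rw [e]; exact norm_sub_le _ _
      _ ≤ 1 + α * (m * ‖B⁻¹‖) := by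
        rw [norm_smul, Real.norm_of_nonneg hα]
        refine add_le_add l2_norm_one_le (mul_le_mul_of_nonneg_left ?_ hα)
        exact (norm_mul_le _ _).trans (mul_le_mul_of_nonneg_right hA (norm_nonneg _))
      _ = _ := by ring
  have hr : (1 + α / β * m) / (1 - α / β * m) = (α * m + β) * (1 / (β - α * m)) := by
    have : β - α * m ≠ 0 := by linarith
    have : 1 - α / β * m ≠ 0 := by linarith
    field_simp
    ring
  rw [hr]
  refine mul_le_mul hBn ?_ (norm_nonneg _) ((norm_nonneg _).trans hBn)
  rw [le_div_iff₀ (by linarith)]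
  linarith

theorem list_factor {d : ℕ} (r : ℝ) (B : ℕ → Matrix (Fin d) (Fin d) ℝ) (L : List ℕ)
    (h : ∀ k ∈ L, IsUnit (B k) ∧ ‖B k‖ * ‖(B k)⁻¹‖ ≤ r) :
    IsUnit (L.map B).prod ∧ ‖(L.map B).prod‖ * ‖((L.map B).prod)⁻¹‖ ≤ r ^ L.length := by
  induction L with
  | nil =>
    simp only [List.map_nil, List.prod_nil, isUnit_one, inv_one, List.length_nil, pow_zero,
      true_and]
    exact mul_le_one₀ l2_norm_one_le (norm_nonneg _) l2_norm_one_le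
  | cons a L ih =>
    obtain ⟨h1, h2⟩ := h a (by simp)
    obtain ⟨i1, i2⟩ := ih (fun k hk => h k (by simp [hk]))
    simp only [List.map_cons, List.prod_cons, List.length_cons]
    refine ⟨h1.mul i1, ?_⟩
    rw [Matrix.mul_inv_rev]
    set P := (L.map B).prod
    calc ‖B a * P‖ * ‖P⁻¹ * (B a)⁻¹‖ ≤ (‖B a‖ * ‖P‖) * (‖P⁻¹‖ * ‖(B a)⁻¹‖) :=
          mul_le_mul (norm_mul_le _ _) (norm_mul_le _ _) (norm_nonneg _) (by positivity)
      _ = (‖P‖ * ‖P⁻¹‖) * (‖B a‖ * ‖(B a)⁻¹‖) := by ring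
      _ ≤ r ^ L.length * r := by
        have : 0 ≤ ‖P‖ * ‖P⁻¹‖ := by positivity
        exact mul_le_mul i2 h2 (by positivity) (this.trans i2)
      _ = _ := (pow_succ _ _).symm

end helpers

/-- For `t ≤ T`, `α ≥ 0`, `β > 0` and matrices `A_t, …, A_{T-1}` with
`‖A_k‖₂ ≤ m` and `(α/β)·m < 1`, the matrix `M = ∏_{k=t}^{T-1} (α A_k + β I)` is invertible
and its condition number satisfies
`‖M‖₂ ‖M⁻¹‖₂ ≤ ((1 + (α/β) m)/(1 − (α/β) m))^(T−t)`. -/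
theorem fastRNN_gradient_factor_condition_number
    (d t T : ℕ) (htT : t ≤ T) (α β m : ℝ) (hα : 0 ≤ α) (hβ : 0 < β)
    (A : ℕ → Matrix (Fin d) (Fin d) ℝ)
    (hA : ∀ k, t ≤ k → k < T → specNorm (A k) ≤ m)
    (hm : α / β * m < 1) :
    let M := ((List.Ico t T).map
      (fun k => α • A k + β • (1 : Matrix (Fin d) (Fin d) ℝ))).prod
    IsUnit M ∧
      specNorm M * specNorm M⁻¹ ≤ ((1 + α / β * m) / (1 - α / β * m)) ^ (T - t) := by
  intro M
  have h := list_factor ((1 + α / β * m) / (1 - α / β * m))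
    (fun k => α • A k + β • (1 : Matrix (Fin d) (Fin d) ℝ)) (List.Ico t T) (fun k hk => by
      rw [List.Ico.mem] at hk
      exact single_factor α β m hα hβ (A k) (hA k hk.1 hk.2) hm)
  rw [List.Ico.length] at h
  exact h
end

section
/- Let T, d be natural numbers, U ∈ ℝ^{d×d}, and D_0, D_1, …, D_T ∈ ℝ^{d×d} matrices with ‖D_k‖₂ ≤ 𝒟 for all k, where 𝒟 ≥ 0. Let 0 ≤ α ≤ 1 and β = 1 − α, suppose 𝒟·‖U‖₂ ≠ 1 and α ≤ 1/(4T·|𝒟‖U‖₂ − 1|). Define A_t = D_t · ∏_{k=t}^{T-1}(α Uᵀ D_{k+1} + β I) for t = 0, …, T (with A_T = D_T). Then Σ_{t=0}^{T} ‖A_t‖₂ ≤ 2𝒟·(T + 1). -/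
section helpers
open scoped Matrix.Norms.L2Operator

theorem specNorm_eq_l2 {m n : ℕ} (A : Matrix (Fin m) (Fin n) ℝ) : specNorm A = ‖A‖ := by
  rw [Matrix.l2_opNorm_def]; rfl

theorem specNorm_mul_le {d : ℕ} (A B : Matrix (Fin d) (Fin d) ℝ) :
    specNorm (A * B) ≤ specNorm A * specNorm B := by
  simp only [specNorm_eq_l2]; exact Matrix.l2_opNorm_mul A B

theorem specNorm_nonneg {d : ℕ} (A : Matrix (Fin d) (Fin d) ℝ) : 0 ≤ specNorm A :=
  norm_nonneg _

theorem specNorm_one_le {d : ℕ} : specNorm (1 : Matrix (Fin d) (Fin d) ℝ) ≤ 1 := by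
  unfold specNorm
  refine ContinuousLinearMap.opNorm_le_bound _ zero_le_one fun x => ?_
  simp [Matrix.toLpLin_one]

theorem specNorm_transpose {d : ℕ} (A : Matrix (Fin d) (Fin d) ℝ) :
    specNorm A.transpose = specNorm A := by
  simp only [specNorm_eq_l2]
  rw [← Matrix.conjTranspose_eq_transpose_of_trivial]
  exact Matrix.l2_opNorm_conjTranspose A

theorem specNorm_comb {d : ℕ} (A B : Matrix (Fin d) (Fin d) ℝ) (a b : ℝ) (ha : 0 ≤ a)
    (hb : 0 ≤ b) : specNorm (a • A + b • B) ≤ a * specNorm A + b * specNorm B := by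
  simp only [specNorm_eq_l2]
  refine (norm_add_le _ _).trans ?_
  rw [norm_smul, norm_smul, Real.norm_of_nonneg ha, Real.norm_of_nonneg hb]

theorem specNorm_prod_le {d : ℕ} (c : ℝ) (hc : 0 ≤ c) (f : ℕ → Matrix (Fin d) (Fin d) ℝ)
    (l : List ℕ) (h : ∀ k ∈ l, specNorm (f k) ≤ c) :
    specNorm (l.map f).prod ≤ c ^ l.length := by
  induction l with
  | nil => simpa using specNorm_one_le
  | cons a l ih =>
    rw [List.map_cons, List.prod_cons, List.length_cons, pow_succ']
    refine (specNorm_mul_le _ _).trans ?_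
    exact mul_le_mul (h a (by simp)) (ih fun k hk => h k (by simp [hk])) (specNorm_nonneg _) hc

end helpers

/-- Let `‖D_k‖₂ ≤ 𝒟` for `k = 0, …, T`, `β = 1 − α` with `0 ≤ α ≤ 1`,
`𝒟‖U‖₂ ≠ 1` and `α ≤ 1/(4T·|𝒟‖U‖₂ − 1|)`. Then the gradient factors
`A_t = D_t ∏_{k=t}^{T-1}(α Uᵀ D_{k+1} + β I)` (with `A_T = D_T`) satisfy
`Σ_{t=0}^{T} ‖A_t‖₂ ≤ 2𝒟(T + 1)`. -/
theorem fastRNN_gradient_factors_sum_bound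
    (T d : ℕ) (U : Matrix (Fin d) (Fin d) ℝ) (Dmat : ℕ → Matrix (Fin d) (Fin d) ℝ)
    (𝒟 α β : ℝ) (h𝒟0 : 0 ≤ 𝒟)
    (hD : ∀ k, k ≤ T → specNorm (Dmat k) ≤ 𝒟)
    (hα0 : 0 ≤ α) (hα1 : α ≤ 1) (hβ : β = 1 - α)
    (hU1 : 𝒟 * specNorm U ≠ 1)
    (hαT : α ≤ 1 / (4 * T * |𝒟 * specNorm U - 1|)) :
    ∑ t ∈ Finset.range (T + 1),
        specNorm (Dmat t * ((List.Ico t T).map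
          (fun k => α • (U.transpose * Dmat (k + 1)) + β • (1 : Matrix (Fin d) (Fin d) ℝ))).prod)
      ≤ 2 * 𝒟 * (T + 1) := by
  have hc : ∀ t ≤ T, specNorm ((List.Ico t T).map
      (fun k => α • (U.transpose * Dmat (k + 1)) + β • (1 : Matrix (Fin d) (Fin d) ℝ))).prod
        ≤ 2 := by
    intro t ht
    have hx0 : (0 : ℝ) ≤ 1 / (4 * T) := by positivity
    refine (specNorm_prod_le (1 + 1 / (4 * T)) (by positivity) _ _ ?_).trans ?_
    · intro k hk
      rw [List.Ico.mem] at hk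
      have hT : (0 : ℝ) < T := by exact_mod_cast (by omega : 0 < T)
      refine (specNorm_comb _ _ _ _ hα0 (by linarith)).trans ?_
      have h1 : specNorm (U.transpose * Dmat (k + 1)) ≤ 𝒟 * specNorm U := by
        refine (specNorm_mul_le _ _).trans ?_
        rw [specNorm_transpose, mul_comm]
        exact mul_le_mul_of_nonneg_right (hD _ (by omega)) (specNorm_nonneg _)
      have h2 := mul_le_mul_of_nonneg_left h1 hα0
      have h3 := mul_le_mul_of_nonneg_left (specNorm_one_le (d := d))
        (by linarith : 0 ≤ β)
      have habs : 0 < |𝒟 * specNorm U - 1| := abs_pos.mpr (sub_ne_zero.mpr hU1)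
      have h4 : α * |𝒟 * specNorm U - 1| ≤ 1 / (4 * T) := by
        rw [le_div_iff₀ (by positivity)] at hαT ⊢
        linarith
      have h5 := mul_le_mul_of_nonneg_left (le_abs_self (𝒟 * specNorm U - 1)) hα0
      subst hβ
      linarith
    · rw [List.Ico.length]
      calc (1 + 1 / (4 * (T : ℝ))) ^ (T - t) ≤ (1 + 1 / (4 * (T : ℝ))) ^ T :=
            pow_le_pow_right₀ (by linarith) (by omega)
        _ ≤ (Real.exp (1 / (4 * T))) ^ T := by
            gcongr
            linarith [Real.add_one_le_exp (1 / (4 * (T : ℝ)))]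
        _ = Real.exp (T * (1 / (4 * T))) := by rw [← Real.exp_nat_mul]
        _ ≤ Real.exp (Real.log 2) := by
            apply Real.exp_le_exp.mpr
            have := Real.log_two_gt_d9
            rcases Nat.eq_zero_or_pos T with h | h
            · subst h; simp; linarith
            · have hT : (0 : ℝ) < T := by exact_mod_cast h
              have : (T : ℝ) * (1 / (4 * T)) = 1 / 4 := by field_simp
              linarith
        _ = 2 := Real.exp_log (by norm_num)
  refine (Finset.sum_le_card_nsmul _ _ (2 * 𝒟) ?_).trans ?_
  · intro t ht
    have ht' : t ≤ T := by simpa [Nat.lt_succ_iff] using ht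
    refine (specNorm_mul_le _ _).trans ?_
    rw [mul_comm 2]
    exact mul_le_mul (hD t ht') (hc t ht') (specNorm_nonneg _) h𝒟0
  · simp; linarith
end
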